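/- Let $n \ge 1$ and let $a_1, \dots, a_n \in \mathbb{R}^n$ be linearly independent unit vectors forming the rows of a matrix $A$, and suppose every $(n-1)\times(n-1)$ sub-determinant of $A$ has absolute value at most $\Delta$ for some $\Delta > 0$. For each $i$, let $F_i$ denote the linear span of $\{a_j : j \ne i\}$. Then $\sum_{i=1}^{n} \frac{1}{\mathrm{dist}(a_i, F_i)} \le \frac{n^{1.5}\, \Delta}{|\det A|}$, where $\mathrm{dist}(a_i, F_i)$ is the Euclidean distance from $a_i$ to $F_i$. -/

import Mathlib

open Matrix Metric

/-- The pairing of `x` with a vector `w` orthogonal to `S` is at most the distance from `x` to `S`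
times the norm of `w`. -/
theorem abs_inner_le_infDist_mul_norm {E : Type*} [NormedAddCommGroup E] [InnerProductSpace ℝ E]
    (S : Submodule ℝ E) (x w : E) (hw : ∀ y ∈ S, inner ℝ y w = 0) :
    |inner ℝ x w| ≤ infDist x (S : Set E) * ‖w‖ := by
  rcases eq_or_ne w 0 with rfl | hw0
  · simp
  rw [← div_le_iff₀ (norm_pos_iff.mpr hw0), le_infDist ⟨0, S.zero_mem⟩]
  intro y hy
  rw [div_le_iff₀ (norm_pos_iff.mpr hw0), dist_eq_norm]
  simpa [inner_sub_left, hw y hy] using abs_real_inner_le_norm (x - y) w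

/-- A Euclidean vector with entries bounded by `C` has norm at most `√(card ι) * C`. -/
theorem EuclideanSpace.norm_le_sqrt_card_mul {ι : Type*} [Fintype ι] (w : EuclideanSpace ℝ ι)
    {C : ℝ} (hC : 0 ≤ C) (hw : ∀ i, |w i| ≤ C) : ‖w‖ ≤ √(Fintype.card ι) * C := by
  rw [EuclideanSpace.norm_eq, Real.sqrt_le_left (by positivity), mul_pow,
    Real.sq_sqrt (by positivity)]
  calc ∑ i, ‖w i‖ ^ 2 ≤ ∑ _i : ι, C ^ 2 := by
        gcongr with i
        exact hw i
    _ = Fintype.card ι * C ^ 2 := by simp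

/-- The entries of the adjugate are bounded by any bound on the maximal proper minors. -/
theorem Matrix.abs_adjugate_le {n : ℕ} (A : Matrix (Fin n) (Fin n) ℝ) {Δ : ℝ}
    (hsub : ∀ (r c : Fin (n - 1) → Fin n), Function.Injective r →
      Function.Injective c → |(A.submatrix r c).det| ≤ Δ) (i j : Fin n) :
    |A.adjugate i j| ≤ Δ := by
  cases n with
  | zero => exact i.elim0
  | succ m =>
    rw [adjugate_fin_succ_eq_det_submatrix, abs_mul, abs_pow, abs_neg, abs_one, one_pow, one_mul]
    exact hsub _ _ Fin.succAbove_right_injective Fin.succAbove_right_injective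

/-- For linearly independent unit rows `a 0, …, a (n-1)` of an `n × n` real
matrix `A` all of whose `(n-1) × (n-1)` sub-determinants are bounded in
absolute value by `Δ > 0`, the sum over `i` of the reciprocals of the
distances from `a i` to the span of the remaining rows is at most
`n^{1.5} Δ / |det A|`. -/
theorem sum_inv_heights_le (n : ℕ) (hn : 1 ≤ n) (A : Matrix (Fin n) (Fin n) ℝ)
    (hunit : ∀ i, ‖(WithLp.equiv 2 (Fin n → ℝ)).symm (A i)‖ = 1)
    (hlin : LinearIndependent ℝ fun i => (WithLp.equiv 2 (Fin n → ℝ)).symm (A i))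
    (Δ : ℝ) (hΔ : 0 < Δ)
    (hsub : ∀ (r c : Fin (n - 1) → Fin n), Function.Injective r →
      Function.Injective c → |(A.submatrix r c).det| ≤ Δ) :
    ∑ i : Fin n,
        1 / Metric.infDist ((WithLp.equiv 2 (Fin n → ℝ)).symm (A i))
          (Submodule.span ℝ
            {v | ∃ j : Fin n, j ≠ i ∧ v = (WithLp.equiv 2 (Fin n → ℝ)).symm (A j)} :
            Set (EuclideanSpace ℝ (Fin n))) ≤
      (n : ℝ) ^ (1.5 : ℝ) * Δ / |A.det| := by
  have hdet : A.det ≠ 0 := by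
    have hrows : LinearIndependent ℝ A.row :=
      hlin.map' (WithLp.linearEquiv 2 ℝ (Fin n → ℝ)).toLinearMap (LinearEquiv.ker _)
    exact ((isUnit_iff_isUnit_det A).mp (linearIndependent_rows_iff_isUnit.mp hrows)).ne_zero
  have hpos : 0 < |A.det| := abs_pos.mpr hdet
  have height_bound : ∀ i : Fin n,
      1 / infDist ((WithLp.equiv 2 (Fin n → ℝ)).symm (A i))
        (Submodule.span ℝ
          {v | ∃ j : Fin n, j ≠ i ∧ v = (WithLp.equiv 2 (Fin n → ℝ)).symm (A j)} :
          Set (EuclideanSpace ℝ (Fin n))) ≤ √n * Δ / |A.det| := by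
    intro i
    set S := Submodule.span ℝ
      {v : EuclideanSpace ℝ (Fin n) |
        ∃ j : Fin n, j ≠ i ∧ v = (WithLp.equiv 2 (Fin n → ℝ)).symm (A j)}
    let w : EuclideanSpace ℝ (Fin n) := WithLp.toLp 2 fun k => A.adjugate k i
    have hinner : ∀ j, inner ℝ ((WithLp.equiv 2 (Fin n → ℝ)).symm (A j)) w =
        if j = i then A.det else 0 := by
      intro j
      have h := congrFun (congrFun (mul_adjugate A) j) i
      simpa [w, PiLp.inner_apply, mul_apply, one_apply, mul_comm] using h
    have horth : ∀ y ∈ S, inner ℝ y w = 0 := by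
      intro y hy
      induction hy using Submodule.span_induction with
      | mem v hv =>
        obtain ⟨j, hj, rfl⟩ := hv
        rw [hinner, if_neg hj]
      | zero => simp
      | add u v _ _ hu hv => rw [inner_add_left, hu, hv, add_zero]
      | smul c v _ hv => rw [real_inner_smul_left, hv, mul_zero]
    have hw : ‖w‖ ≤ √n * Δ := by
      simpa using EuclideanSpace.norm_le_sqrt_card_mul w hΔ.le
        fun k => A.abs_adjugate_le hsub k i
    have hle := (abs_inner_le_infDist_mul_norm S
      ((WithLp.equiv 2 (Fin n → ℝ)).symm (A i)) w horth).trans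
      (mul_le_mul_of_nonneg_left hw infDist_nonneg)
    rw [hinner, if_pos rfl] at hle
    have hdist := pos_of_mul_pos_left (hpos.trans_le hle) (by positivity)
    rw [div_le_div_iff₀ hdist hpos]
    linarith
  refine (Finset.sum_le_sum fun i _ => height_bound i).trans_eq ?_
  have hn0 : (0 : ℝ) < n := by exact_mod_cast hn
  have hpow : (n : ℝ) ^ (1.5 : ℝ) = n * √n := by
    rw [Real.sqrt_eq_rpow, ← Real.rpow_one_add' hn0.le (by norm_num)]
    norm_num
  rw [hpow, Finset.sum_const, Finset.card_univ, Fintype.card_fin, nsmul_eq_mul]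
  ring
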